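/- arXiv:2407.08450 — 2 statements merged into one kernel-verified Lean document; each statement's English description precedes it below -/
import Mathlib

section
/- There do not exist polynomials σ₀, σ₁ ∈ ℝ[t], each expressible as a finite sum of squares of polynomials in ℝ[t], such that 1 − t = σ₀ + (1 − t)³ · σ₁ in ℝ[t]. (Consequently, the noncommutative polynomial f = 1 − x₁ cannot be written as Σᵢ sᵢ*sᵢ + Σⱼ vⱼ* f³ vⱼ with sᵢ, vⱼ ∈ ℂ⟨x₁⟩, even though D_{f³} = D_f is a free spectrahedron.) -/
/-- A univariate real polynomial is a sum of squares. -/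
def IsSumOfSquares (σ : Polynomial ℝ) : Prop :=
  ∃ (m : ℕ) (p : Fin m → Polynomial ℝ), σ = ∑ i, (p i) ^ 2

/-!
If a sum of squares vanishes at a point `a` over a formally real ring, then each of the squared
polynomials vanishes at `a`, so the sum vanishes there to order at least two. In an identity
`f = σ₀ + f ^ n * σ₁` with `2 ≤ n` and `f` vanishing at `a`, both terms on the right therefore
vanish to order at least two at `a`, so `a` cannot be a simple root of `f`. The polynomial `1 - t`
has the simple root `1`.
-/

open Polynomial

theorem isSumSq_map {A B F : Type*} [NonUnitalNonAssocSemiring A] [NonUnitalNonAssocSemiring B]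
    [FunLike F A B] [NonUnitalRingHomClass F A B] (f : F) {s : A} (hs : IsSumSq s) :
    IsSumSq (f s) := by
  induction hs with
  | zero => simp
  | sq_add a _ ih => simpa only [map_add, map_mul] using ih.sq_add (f a)

theorem mem_ker_sq_of_isSumSq {A B : Type*} [CommSemiring A] [Ring B] [IsFormallyReal B]
    (f : A →+* B) {s : A} (hs : IsSumSq s) (hs_zero : f s = 0) : s ∈ RingHom.ker f ^ 2 := by
  induction hs with
  | zero => exact zero_mem _
  | @sq_add a s hs ih =>
    have hsum : f a * f a + f s = 0 := by rw [← map_mul, ← map_add, hs_zero]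
    have hfs : f s = 0 :=
      IsFormallyReal.eq_zero_of_add_left (.mul_self _) (isSumSq_map f hs) hsum
    have hfa : f a = 0 := by simpa [hfs, ← pow_two] using hsum
    rw [pow_two] at ih ⊢
    exact add_mem (Ideal.mul_mem_mul hfa hfa) (ih hfs)

section DoubleRoot

variable {R : Type*} [CommRing R]

theorem X_sub_C_sq_dvd_of_isSumSq_of_isRoot [IsFormallyReal R] {s : R[X]} {a : R}
    (hs : IsSumSq s) (ha : s.IsRoot a) : (X - C a) ^ 2 ∣ s := by
  rw [← Ideal.mem_span_singleton, ← Ideal.span_singleton_pow, ← ker_evalRingHom]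
  exact mem_ker_sq_of_isSumSq (evalRingHom a) hs ha

theorem eval_derivative_eq_zero_of_X_sub_C_sq_dvd {f : R[X]} {a : R}
    (h : (X - C a) ^ 2 ∣ f) : f.derivative.eval a = 0 := by
  have hdvd : X - C a ∣ derivative f := by
    simpa using pow_sub_one_dvd_derivative_of_pow_dvd h
  exact dvd_iff_isRoot.mp hdvd

theorem no_sos_certificate_for_cube_general [IsFormallyReal R] {f : R[X]} {a : R}
    (hfa : f.IsRoot a) (hf'a : f.derivative.eval a ≠ 0) {n : ℕ} (hn : 2 ≤ n) :
    ¬ ∃ σ₀ σ₁ : R[X], IsSumSq σ₀ ∧ f = σ₀ + f ^ n * σ₁ := by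
  rintro ⟨σ₀, σ₁, hσ₀, h⟩
  have hroot : σ₀.IsRoot a := by
    simpa [hfa.eq_zero, show n ≠ 0 by lia] using (congrArg (eval a) h).symm
  have hdvd_sos : (X - C a) ^ 2 ∣ σ₀ := X_sub_C_sq_dvd_of_isSumSq_of_isRoot hσ₀ hroot
  have hdvd_pow : (X - C a) ^ 2 ∣ f ^ n := pow_dvd_pow_of_dvd_of_le (dvd_iff_isRoot.mpr hfa) hn
  have hdvd : (X - C a) ^ 2 ∣ f := h ▸ dvd_add hdvd_sos (hdvd_pow.mul_right σ₁)
  exact hf'a (eval_derivative_eq_zero_of_X_sub_C_sq_dvd hdvd)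

end DoubleRoot

theorem IsSumOfSquares.isSumSq {σ : ℝ[X]} (h : IsSumOfSquares σ) : IsSumSq σ := by
  obtain ⟨m, p, rfl⟩ := h
  exact .sum_sq Finset.univ p

/-- there are no sums of squares `σ₀, σ₁ ∈ ℝ[t]` with
`1 - t = σ₀ + (1 - t)³ σ₁`. -/
theorem no_sos_certificate_for_cube :
    ¬ ∃ σ0 σ1 : Polynomial ℝ, IsSumOfSquares σ0 ∧ IsSumOfSquares σ1 ∧
      (1 - Polynomial.X : Polynomial ℝ) = σ0 + (1 - Polynomial.X) ^ 3 * σ1 := by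
  rintro ⟨σ₀, σ₁, hσ₀, -, h⟩
  exact no_sos_certificate_for_cube_general (a := 1) (by simp) (by simp) (by norm_num)
    ⟨σ₀, σ₁, hσ₀.isSumSq, h⟩
end

section
/- Convexity of a free semialgebraic set implies matrix convexity: let f = f* ∈ M_d(ℂ⟨x⟩) with f(0) positive definite, and suppose that for every k ∈ ℕ the set D_f(k) is a convex subset of (H_k)ⁿ. Then D_f is matrix convex: for all k₁,…,k_ℓ,k ∈ ℕ, all Vᵢ ∈ ℂ^{kᵢ×k} with V₁*V₁ + ⋯ + V_ℓ*V_ℓ = I_k, and all X⁽ⁱ⁾ ∈ D_f(kᵢ) for i = 1,…,ℓ, the tuple V₁*X⁽¹⁾V₁ + ⋯ + V_ℓ*X⁽ℓ⁾V_ℓ (whose j-th entry is Σᵢ Vᵢ*Xⱼ⁽ⁱ⁾Vᵢ) belongs to D_f(k). -/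
open scoped Kronecker Matrix ComplexOrder

/-- Noncommutative polynomials: the free `ℂ`-algebra `ℂ⟨x₁,…,xₙ⟩` on `n` generators. -/
abbrev FreeAlg (n : ℕ) := FreeAlgebra ℂ (Fin n)

/-- Evaluation of a matrix of noncommutative polynomials at an `n`-tuple of `k × k` complex
matrices, i.e. the image under `id ⊗ ev_X`. -/
noncomputable def evalM {n k : ℕ} {I J : Type*} (f : Matrix I J (FreeAlg n))
    (X : Fin n → Matrix (Fin k) (Fin k) ℂ) : Matrix (I × Fin k) (J × Fin k) ℂ :=
  fun p q => FreeAlgebra.lift ℂ X (f p.1 q.1) p.2 q.2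

/-- The conjugate-linear involutive anti-automorphism on `ℂ⟨x⟩` fixing the generators:
reverse each word and conjugate each coefficient. -/
noncomputable def nstar {n : ℕ} (a : FreeAlg n) : FreeAlg n :=
  (FreeAlgebra.equivMonoidAlgebraFreeMonoid).symm
    (MonoidAlgebra.ofCoeff (Finsupp.mapDomain FreeMonoid.reverse
      (Finsupp.mapRange (starRingEnd ℂ) (map_zero _)
        ((FreeAlgebra.equivMonoidAlgebraFreeMonoid) a).coeff)))

/-- Conjugate-transpose of a matrix over `ℂ⟨x⟩`. -/
noncomputable def adjM {n : ℕ} {I J : Type*} (f : Matrix I J (FreeAlg n)) :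
    Matrix J I (FreeAlg n) :=
  fun i j => nstar (f j i)

/-- A matrix `f` over `ℂ⟨x⟩` is hermitian if `f = f*`. -/
def IsHermPoly {n : ℕ} {I : Type*} (f : Matrix I I (FreeAlg n)) : Prop :=
  ∀ i j, f i j = nstar (f j i)

/-- Evaluation `L(X) = A₀ ⊗ I + ∑ⱼ Aⱼ ⊗ Xⱼ` of a linear matrix pencil at a matrix tuple. -/
noncomputable def pencilK {n d k : ℕ} (A0 : Matrix (Fin d) (Fin d) ℂ)
    (A : Fin n → Matrix (Fin d) (Fin d) ℂ) (X : Fin n → Matrix (Fin k) (Fin k) ℂ) :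
    Matrix (Fin d × Fin k) (Fin d × Fin k) ℂ :=
  A0 ⊗ₖ (1 : Matrix (Fin k) (Fin k) ℂ) + ∑ j, A j ⊗ₖ X j

/-- Evaluation `L(X) = I ⊗ I + ∑ⱼ Aⱼ ⊗ Xⱼ` of a monic linear matrix pencil. -/
noncomputable def monicK {n d k : ℕ} (A : Fin n → Matrix (Fin d) (Fin d) ℂ)
    (X : Fin n → Matrix (Fin k) (Fin k) ℂ) : Matrix (Fin d × Fin k) (Fin d × Fin k) ℂ :=
  1 + ∑ j, A j ⊗ₖ X j

/-- The monic pencil `I + ∑ⱼ Aⱼ xⱼ` as a matrix of noncommutative polynomials. -/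
noncomputable def monicPoly {n e : ℕ} (A : Fin n → Matrix (Fin e) (Fin e) ℂ) :
    Matrix (Fin e) (Fin e) (FreeAlg n) :=
  1 + ∑ j, (A j).map (fun c => c • FreeAlgebra.ι ℂ j)

/-- The subspace of noncommutative polynomials of degree at most `δ`:
the `ℂ`-linear span of products of at most `δ` generators. -/
noncomputable def degLE (n δ : ℕ) : Submodule ℂ (FreeAlg n) :=
  Submodule.span ℂ
    {a | ∃ w : List (Fin n), w.length ≤ δ ∧ a = (w.map (FreeAlgebra.ι ℂ)).prod}

/-- A matrix over `ℂ⟨x⟩` has degree at most `δ` if each entry does. -/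
def matDegLE {n : ℕ} {I J : Type*} (f : Matrix I J (FreeAlg n)) (δ : ℕ) : Prop :=
  ∀ i j, f i j ∈ degLE n δ

/-- The degree of a matrix of noncommutative polynomials: the least `δ` such that every entry
lies in the span of words of length at most `δ`. -/
noncomputable def matDeg {n : ℕ} {I J : Type*} (f : Matrix I J (FreeAlg n)) : ℕ :=
  sInf {δ | matDegLE f δ}

/-- Evaluation of `f` at the zero scalar tuple, `f(0) ∈ M_d(ℂ)`. -/
noncomputable def evalZero {n : ℕ} {I J : Type*} (f : Matrix I J (FreeAlg n)) :
    Matrix I J ℂ :=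
  f.map (⇑(FreeAlgebra.lift ℂ (fun _ : Fin n => (0 : ℂ))))

/-
Put the `X⁽ⁱ⁾` into a direct sum `Y` and stack the `Vᵢ` into an isometry `V`, so that the
combination becomes the compression `V*YV`. With the self-adjoint unitary `U = 2VV* - 1`, the
midpoint of `Y` and `UYU` commutes with `VV*` and has compression `V*YV`: averaging turns a
compression into a restriction to a reducing subspace. Hence levelwise midpoint convexity suffices
for any graded set which is closed under direct sums, unitary conjugation and restriction to
reducing subspaces.
-/

section Intertwining

variable {R m k : Type*} [Fintype m] [Fintype k] [DecidableEq m] [DecidableEq k] {σ : Type*}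

theorem lift_mul_eq_mul_lift [CommSemiring R] {X : σ → Matrix m m R} {A : σ → Matrix k k R}
    {W : Matrix m k R} (h : ∀ j, X j * W = W * A j) (p : FreeAlgebra R σ) :
    FreeAlgebra.lift R X p * W = W * FreeAlgebra.lift R A p := by
  induction p using FreeAlgebra.induction with
  | grade0 c => simp [Algebra.algebraMap_eq_smul_one]
  | grade1 j => simpa using h j
  | mul p q hp hq =>
    rw [map_mul, map_mul, Matrix.mul_assoc, hq, ← Matrix.mul_assoc, hp, Matrix.mul_assoc]
  | add p q hp hq => rw [map_add, map_add, Matrix.add_mul, Matrix.mul_add, hp, hq]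

theorem eq_sum_conjTranspose_mul_mul_of_intertwine {ι : Type*} [Fintype ι] {κ : ι → Type*}
    [∀ i, Fintype (κ i)] [Semiring R] [Star R] {V : ∀ i, Matrix (κ i) k R}
    (hV : ∑ i, (V i)ᴴ * V i = 1) {X : ∀ i, Matrix (κ i) (κ i) R} {A : Matrix k k R}
    (h : ∀ i, X i * V i = V i * A) :
    A = ∑ i, (V i)ᴴ * X i * V i :=
  calc A = (∑ i, (V i)ᴴ * V i) * A := by rw [hV, Matrix.one_mul]
    _ = ∑ i, (V i)ᴴ * X i * V i := by simp only [Matrix.sum_mul, Matrix.mul_assoc, h]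

end Intertwining

section GradedSets

variable {R σ : Type*} [Semiring R] [Star R]

/-- Matrix convexity of a graded set of matrix tuples: closure under all matrix convex combinations
`∑ᵢ Vᵢ* X⁽ⁱ⁾ Vᵢ`, whose summands may have different sizes. -/
def IsMatrixConvex (S : ∀ k : ℕ, Set (σ → Matrix (Fin k) (Fin k) R)) : Prop :=
  ∀ ⦃ℓ k : ℕ⦄ ⦃κ : Fin ℓ → ℕ⦄ (V : ∀ i, Matrix (Fin (κ i)) (Fin k) R)
    (X : ∀ i, σ → Matrix (Fin (κ i)) (Fin (κ i)) R),
    ∑ i, (V i)ᴴ * V i = 1 → (∀ i, X i ∈ S (κ i)) → (fun j => ∑ i, (V i)ᴴ * X i j * V i) ∈ S k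

/-- Closure of a graded set of matrix tuples under those matrix convex combinations `A` for which
every `Vᵢ` intertwines `X⁽ⁱ⁾` and `A`. This is a single condition which covers direct sums, unitary
conjugation and restriction to reducing subspaces. -/
def IsIntertwiningClosed (S : ∀ k : ℕ, Set (σ → Matrix (Fin k) (Fin k) R)) : Prop :=
  ∀ ⦃ℓ k : ℕ⦄ ⦃κ : Fin ℓ → ℕ⦄ (V : ∀ i, Matrix (Fin (κ i)) (Fin k) R)
    (X : ∀ i, σ → Matrix (Fin (κ i)) (Fin (κ i)) R) (A : σ → Matrix (Fin k) (Fin k) R),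
    ∑ i, (V i)ᴴ * V i = 1 → (∀ i, X i ∈ S (κ i)) → (∀ i j, X i j * V i = V i * A j) → A ∈ S k

theorem IsIntertwiningClosed.mem_of_isometry
    {S : ∀ k : ℕ, Set (σ → Matrix (Fin k) (Fin k) R)} (hS : IsIntertwiningClosed S) {m k : ℕ}
    {X : σ → Matrix (Fin m) (Fin m) R} {A : σ → Matrix (Fin k) (Fin k) R}
    {W : Matrix (Fin m) (Fin k) R} (hW : Wᴴ * W = 1) (h : ∀ j, X j * W = W * A j) (hX : X ∈ S m) :
    A ∈ S k :=
  hS (fun _ : Fin 1 => W) (fun _ => X) A (by simpa using hW) (fun _ => hX) fun _ => h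

end GradedSets

section RangeReflection

variable {R m k : Type*} [Ring R] [StarRing R] [Fintype k] [DecidableEq m]

/-- For an isometry `V`, the self-adjoint unitary which is `1` on the range of `V` and `-1` on its
orthogonal complement. -/
def rangeReflection (V : Matrix m k R) : Matrix m m R :=
  2 • (V * Vᴴ) - 1

theorem conjTranspose_rangeReflection (V : Matrix m k R) :
    (rangeReflection V)ᴴ = rangeReflection V := by
  simp [rangeReflection]

variable [Fintype m] [DecidableEq k] {V : Matrix m k R}

theorem rangeReflection_mul (hV : Vᴴ * V = 1) : rangeReflection V * V = V := by
  rw [rangeReflection, Matrix.sub_mul, Matrix.smul_mul, Matrix.mul_assoc, hV, Matrix.mul_one,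
    Matrix.one_mul, two_smul, add_sub_cancel_right]

theorem rangeReflection_mul_self (hV : Vᴴ * V = 1) :
    rangeReflection V * rangeReflection V = 1 :=
  calc rangeReflection V * rangeReflection V
      = rangeReflection V * (2 • (V * Vᴴ) - 1) := rfl
    _ = 2 • (rangeReflection V * V * Vᴴ) - rangeReflection V := by
      rw [Matrix.mul_sub, Matrix.mul_smul, Matrix.mul_assoc, Matrix.mul_one]
    _ = 1 := by rw [rangeReflection_mul hV, rangeReflection, sub_sub_cancel]

theorem midpoint_rangeReflection_mul [Invertible (2 : R)] (hV : Vᴴ * V = 1) (Y : Matrix m m R) :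
    midpoint R Y (rangeReflection V * Y * rangeReflection V) * V = V * (Vᴴ * Y * V) := by
  have hUYUV : rangeReflection V * Y * rangeReflection V * V = 2 • (V * (Vᴴ * Y * V)) - Y * V := by
    rw [Matrix.mul_assoc, rangeReflection_mul hV]
    simp only [rangeReflection, Matrix.sub_mul, Matrix.smul_mul, Matrix.one_mul, Matrix.mul_assoc]
  rw [midpoint_eq_smul_add, Matrix.smul_mul, Matrix.add_mul, hUYUV, add_sub_cancel,
    ← Nat.cast_smul_eq_nsmul R, smul_smul, Nat.cast_ofNat, invOf_mul_self, one_smul]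

end RangeReflection

section SummandProj

variable {R ι r : Type*} {κ : ι → Type*} [DecidableEq ι] [∀ i, DecidableEq (κ i)]

/-- The coordinate projection of the direct sum of the spaces `R ^ κ i` onto its `i`-th summand,
where the basis of the direct sum is indexed by `r` through `e`. -/
def summandProj (R : Type*) [Zero R] [One R] (e : (Σ i, κ i) ≃ r) (i : ι) : Matrix (κ i) r R :=
  (1 : Matrix (Σ i, κ i) (Σ i, κ i) R).submatrix (Sigma.mk i) e.symm

variable [Semiring R] [StarRing R] (e : (Σ i, κ i) ≃ r)

theorem sum_conjTranspose_summandProj_mul [Fintype ι] [∀ i, Fintype (κ i)] [DecidableEq r] :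
    ∑ i, (summandProj R e i)ᴴ * summandProj R e i = 1 := by
  have h : ∑ i, (summandProj R e i)ᴴ * summandProj R e i
      = ((1 : Matrix (Σ i, κ i) (Σ i, κ i) R) * 1).submatrix e.symm e.symm := by
    ext s t
    simp only [summandProj, Matrix.conjTranspose_submatrix, Matrix.conjTranspose_one,
      Matrix.sum_apply, Matrix.mul_apply, Matrix.submatrix_apply, Fintype.sum_sigma]
  rw [h, Matrix.one_mul, Matrix.submatrix_one_equiv]

theorem summandProj_mul_conjTranspose [Fintype r] (i i' : ι) :
    summandProj R e i * (summandProj R e i')ᴴ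
      = (1 : Matrix (Σ i, κ i) (Σ i, κ i) R).submatrix (Sigma.mk i) (Sigma.mk i') := by
  let _ : Fintype (Σ i, κ i) := Fintype.ofEquiv r e.symm
  rw [summandProj, summandProj, Matrix.conjTranspose_submatrix, Matrix.conjTranspose_one,
    Matrix.submatrix_mul_equiv, Matrix.one_mul]

theorem summandProj_mul_sum [Fintype ι] [∀ i, Fintype (κ i)] [Fintype r] {q : Type*}
    (B : ∀ i, Matrix (κ i) q R) (i : ι) :
    summandProj R e i * ∑ i', (summandProj R e i')ᴴ * B i' = B i := by
  have orthogonal : ∀ i' ≠ i, summandProj R e i * (summandProj R e i')ᴴ = 0 := by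
    intro i' hi'
    ext a b
    simp [summandProj_mul_conjTranspose, hi'.symm]
  have coisometry : summandProj R e i * (summandProj R e i)ᴴ = 1 := by
    rw [summandProj_mul_conjTranspose, Matrix.submatrix_one _ sigma_mk_injective]
  simp only [Matrix.mul_sum, ← Matrix.mul_assoc]
  rw [Fintype.sum_eq_single i fun i' hi' => by rw [orthogonal i' hi', Matrix.zero_mul],
    coisometry, Matrix.one_mul]

end SummandProj

namespace IsIntertwiningClosed

variable {R σ : Type*}

theorem directSum_mem [Semiring R] [StarRing R]
    {S : ∀ k : ℕ, Set (σ → Matrix (Fin k) (Fin k) R)} (hS : IsIntertwiningClosed S)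
    {ℓ m : ℕ} {κ : Fin ℓ → ℕ} (e : (Σ i, Fin (κ i)) ≃ Fin m)
    {X : ∀ i, σ → Matrix (Fin (κ i)) (Fin (κ i)) R} (hX : ∀ i, X i ∈ S (κ i)) :
    (fun j => ∑ i, (summandProj R e i)ᴴ * (X i j * summandProj R e i)) ∈ S m :=
  hS (summandProj R e) X _ (sum_conjTranspose_summandProj_mul e) hX fun i j =>
    (summandProj_mul_sum e (fun i => X i j * summandProj R e i) i).symm

variable [Ring R] [StarRing R] {S : ∀ k : ℕ, Set (σ → Matrix (Fin k) (Fin k) R)}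

theorem compression_mem [Invertible (2 : R)] (hS : IsIntertwiningClosed S)
    (hmid : ∀ k, ∀ X ∈ S k, ∀ Y ∈ S k, midpoint R X Y ∈ S k) {m k : ℕ}
    {Y : σ → Matrix (Fin m) (Fin m) R} (hY : Y ∈ S m) {V : Matrix (Fin m) (Fin k) R}
    (hV : Vᴴ * V = 1) :
    (fun j => Vᴴ * Y j * V) ∈ S k := by
  set U := rangeReflection V
  have hUU : U * U = 1 := rangeReflection_mul_self hV
  have hUYU : (fun j => U * Y j * U) ∈ S m := by
    refine hS.mem_of_isometry (W := U) ?_ (fun j => ?_) hY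
    · rw [conjTranspose_rangeReflection, hUU]
    · rw [Matrix.mul_assoc U, ← Matrix.mul_assoc, hUU, Matrix.one_mul]
  exact hS.mem_of_isometry hV (fun j => midpoint_rangeReflection_mul hV (Y j))
    (hmid m Y hY _ hUYU)

theorem isMatrixConvex [Invertible (2 : R)] (hS : IsIntertwiningClosed S)
    (hmid : ∀ k, ∀ X ∈ S k, ∀ Y ∈ S k, midpoint R X Y ∈ S k) : IsMatrixConvex S := by
  intro ℓ k κ V X hV hX
  set P := summandProj R (finSigmaFinEquiv (n := κ))
  set W := ∑ i, (P i)ᴴ * V i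
  have hPW : ∀ i, P i * W = V i := summandProj_mul_sum _ V
  have hWP : ∀ i, Wᴴ * (P i)ᴴ = (V i)ᴴ := fun i => by rw [← Matrix.conjTranspose_mul, hPW]
  have hW : Wᴴ * W = 1 :=
    calc Wᴴ * W = Wᴴ * ∑ i, (P i)ᴴ * V i := rfl
      _ = ∑ i, (V i)ᴴ * V i := by simp only [Matrix.mul_sum, ← Matrix.mul_assoc, hWP]
      _ = 1 := hV
  have hcompress : ∀ j, Wᴴ * (∑ i, (P i)ᴴ * (X i j * P i)) * W = ∑ i, (V i)ᴴ * X i j * V i := by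
    intro j
    simp only [Matrix.mul_sum, Matrix.sum_mul, ← Matrix.mul_assoc, hWP]
    simp only [Matrix.mul_assoc, hPW]
  simpa only [P, hcompress] using
    hS.compression_mem hmid (hS.directSum_mem finSigmaFinEquiv hX) hW

end IsIntertwiningClosed

section FreeSemialgebraicSet

variable {n : ℕ} {I J : Type*}

/-- The level `D_f(k)` of the free semialgebraic set `D_f`: the hermitian `k × k` tuples at which
`f` is positive semidefinite. -/
def freeSemialgebraicSet (f : Matrix I I (FreeAlg n)) (k : ℕ) :
    Set (Fin n → Matrix (Fin k) (Fin k) ℂ) :=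
  {X | (∀ j, (X j).IsHermitian) ∧ (evalM f X).PosSemidef}

theorem evalM_mul_one_kronecker [Fintype I] [DecidableEq I] [Fintype J] [DecidableEq J]
    (f : Matrix I J (FreeAlg n)) {m k : ℕ}
    {X : Fin n → Matrix (Fin m) (Fin m) ℂ} {A : Fin n → Matrix (Fin k) (Fin k) ℂ}
    {W : Matrix (Fin m) (Fin k) ℂ} (h : ∀ j, X j * W = W * A j) :
    evalM f X * ((1 : Matrix J J ℂ) ⊗ₖ W) = ((1 : Matrix I I ℂ) ⊗ₖ W) * evalM f A := by
  ext ⟨p, a⟩ ⟨q, b⟩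
  simpa [evalM, Matrix.mul_apply, Fintype.sum_prod_type, Matrix.one_apply] using
    congrFun₂ (lift_mul_eq_mul_lift h (f p q)) a b

theorem isIntertwiningClosed_freeSemialgebraicSet [Finite I] (f : Matrix I I (FreeAlg n)) :
    IsIntertwiningClosed (freeSemialgebraicSet f) := by
  classical
  cases nonempty_fintype I
  intro ℓ k κ V X A hV hX hXV
  refine ⟨fun j => ?_, ?_⟩
  · rw [eq_sum_conjTranspose_mul_mul_of_intertwine hV fun i => hXV i j]
    exact isSelfAdjoint_sum _ fun i _ =>
      Matrix.isHermitian_conjTranspose_mul_mul (V i) ((hX i).1 j)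
  · have hIV : ∑ i, ((1 : Matrix I I ℂ) ⊗ₖ V i)ᴴ * ((1 : Matrix I I ℂ) ⊗ₖ V i) = 1 := by
      simp only [Matrix.conjTranspose_kronecker, ← Matrix.mul_kronecker_mul,
        Matrix.conjTranspose_one, Matrix.one_mul]
      rw [← Matrix.one_kronecker_one, ← hV]
      exact (map_sum (Matrix.kroneckerBilinear (R := ℂ) (α := ℂ) (1 : Matrix I I ℂ)) _ _).symm
    rw [eq_sum_conjTranspose_mul_mul_of_intertwine hIV fun i => evalM_mul_one_kronecker f (hXV i)]
    exact Matrix.posSemidef_sum _ fun i _ => (hX i).2.conjTranspose_mul_mul_same _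

theorem midpoint_mem_freeSemialgebraicSet_of_segment {f : Matrix I I (FreeAlg n)} {k : ℕ}
    {X Y : Fin n → Matrix (Fin k) (Fin k) ℂ} (hX : ∀ j, (X j).IsHermitian)
    (hY : ∀ j, (Y j).IsHermitian)
    (hXY : ∀ t : ℝ, 0 ≤ t → t ≤ 1 →
      (evalM f (fun j => (t : ℂ) • X j + ((1 - t : ℝ) : ℂ) • Y j)).PosSemidef) :
    midpoint ℂ X Y ∈ freeSemialgebraicSet f k := by
  have hmid : midpoint ℂ X Y
      = fun j => ((1 / 2 : ℝ) : ℂ) • X j + ((1 - 1 / 2 : ℝ) : ℂ) • Y j := by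
    ext1 j
    norm_num [midpoint_eq_smul_add]
  have isSelfAdjoint_ofReal (t : ℝ) : IsSelfAdjoint (t : ℂ) := Complex.conj_ofReal t
  rw [hmid]
  exact ⟨fun j => ((isSelfAdjoint_ofReal _).smul (hX j)).add ((isSelfAdjoint_ofReal _).smul (hY j)),
    hXY (1 / 2) (by norm_num) (by norm_num)⟩

end FreeSemialgebraicSet

theorem convex_implies_matrixConvex_general {n : ℕ} {I : Type*} [Finite I]
    (f : Matrix I I (FreeAlg n))
    (hmid : ∀ k, ∀ X ∈ freeSemialgebraicSet f k, ∀ Y ∈ freeSemialgebraicSet f k,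
      midpoint ℂ X Y ∈ freeSemialgebraicSet f k) :
    IsMatrixConvex (freeSemialgebraicSet f) :=
  (isIntertwiningClosed_freeSemialgebraicSet f).isMatrixConvex hmid

/-- for `f = f*` with `f(0) ≻ 0`, levelwise convexity of `D_f` implies
matrix convexity of `D_f`. -/
theorem convex_implies_matrixConvex {n d : ℕ}
    (f : Matrix (Fin d) (Fin d) (FreeAlg n)) (hf : IsHermPoly f)
    (hf0 : (evalZero f).PosDef)
    (hconv : ∀ (k : ℕ) (X Y : Fin n → Matrix (Fin k) (Fin k) ℂ),
      (∀ j, (X j).IsHermitian) → (∀ j, (Y j).IsHermitian) →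
      (evalM f X).PosSemidef → (evalM f Y).PosSemidef →
      ∀ t : ℝ, 0 ≤ t → t ≤ 1 →
        (evalM f (fun j => (t : ℂ) • X j + ((1 - t : ℝ) : ℂ) • Y j)).PosSemidef)
    (ℓ k : ℕ) (κ : Fin ℓ → ℕ)
    (V : (i : Fin ℓ) → Matrix (Fin (κ i)) (Fin k) ℂ)
    (hV : ∑ i, (V i)ᴴ * V i = 1)
    (X : (i : Fin ℓ) → Fin n → Matrix (Fin (κ i)) (Fin (κ i)) ℂ)
    (hXherm : ∀ i j, (X i j).IsHermitian)
    (hX : ∀ i, (evalM f (X i)).PosSemidef) :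
    (∀ j, (∑ i, (V i)ᴴ * X i j * V i).IsHermitian) ∧
      (evalM f (fun j => ∑ i, (V i)ᴴ * X i j * V i)).PosSemidef :=
  convex_implies_matrixConvex_general f (fun m A hA B hB =>
    midpoint_mem_freeSemialgebraicSet_of_segment hA.1 hB.1 (hconv m A B hA.1 hB.1 hA.2 hB.2))
    V X hV fun i => ⟨hXherm i, hX i⟩
end
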